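/- Let k be a positive integer, let G be a finite simple graph, let I ⊆ V(G), and let P be an I-connected path decomposition of G of width at most k−1 that is S-structured for every bottleneck S of G. Then the family of intervals {I(S,P) : S a bottleneck of G} is laminar: for any two bottlenecks S and S', either I(S,P) ⊆ I(S',P), or I(S',P) ⊆ I(S,P), or I(S,P) ∩ I(S',P) = ∅. -/

import Mathlib

open SimpleGraph

variable {V : Type*}

/-- `N_G(Y)`: the set of vertices outside `Y` having a neighbor in `Y`. -/
def nbhdSet (G : SimpleGraph V) (Y : Set V) : Set V :=
  {v | v ∉ Y ∧ ∃ u ∈ Y, G.Adj u v}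

/-- `C` is a connected component of the subgraph of `G` induced by `U`. -/
def IsCompIn (G : SimpleGraph V) (U C : Set V) : Prop :=
  C.Nonempty ∧ C ⊆ U ∧ (G.induce C).Connected ∧
    ∀ u ∈ C, ∀ v ∈ U, G.Adj u v → v ∈ C

/-- `C` is a connected component of `G - S`. -/
def IsCompOf (G : SimpleGraph V) (S C : Set V) : Prop :=
  IsCompIn G Sᶜ C

/-- `C` is an `S`-branch: a connected component of `G - S` with `N_G(C) = S`. -/
def IsBranch (G : SimpleGraph V) (S C : Set V) : Prop :=
  IsCompOf G S C ∧ nbhdSet G C = S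

/-- `S` is a bottleneck (for the width parameter `k`): a nonempty set with
at least `2k+1` `S`-branches. -/
def IsBottleneck (G : SimpleGraph V) (k : ℕ) (S : Set V) : Prop :=
  S.Nonempty ∧ 2 * k + 1 ≤ {C : Set V | IsBranch G S C}.ncard

/-- `(X 0, …, X (l-1))` is a path decomposition of `G`. -/
def IsPathDecomp (G : SimpleGraph V) (l : ℕ) (X : ℕ → Set V) : Prop :=
  (∀ v, ∃ i < l, v ∈ X i) ∧
  (∀ u v, G.Adj u v → ∃ i < l, u ∈ X i ∧ v ∈ X i) ∧
  (∀ i j m, i ≤ j → j ≤ m → m < l → X i ∩ X m ⊆ X j)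

/-- The width of a path decomposition: the maximum bag size minus one. -/
noncomputable def pdWidth (l : ℕ) (X : ℕ → Set V) : ℕ :=
  ((Finset.range l).sup fun i => (X i).ncard) - 1

/-- The set of indices of bags meeting the vertex set `C`. -/
def supp (l : ℕ) (X : ℕ → Set V) (C : Set V) : Set ℕ :=
  {t | t < l ∧ (C ∩ X t).Nonempty}

/-- `a(C)`: the first index of a bag meeting `C`. -/
noncomputable def firstIdx (l : ℕ) (X : ℕ → Set V) (C : Set V) : ℕ :=
  sInf (supp l X C)

/-- `b(C)`: the last index of a bag meeting `C`. -/
noncomputable def lastIdx (l : ℕ) (X : ℕ → Set V) (C : Set V) : ℕ :=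
  sSup (supp l X C)

/-- `C` is an in-branch of `S` with respect to the decomposition:
an `S`-branch with `S ⊆ X (a C)` and `S ⊆ X (b C)`. -/
def IsInBranch (G : SimpleGraph V) (l : ℕ) (X : ℕ → Set V) (S C : Set V) : Prop :=
  IsBranch G S C ∧ S ⊆ X (firstIdx l X C) ∧ S ⊆ X (lastIdx l X C)

/-- `α(S)`: the minimum of `a(H)` over in-branches `H` of `S`. -/
noncomputable def botStart (G : SimpleGraph V) (l : ℕ) (X : ℕ → Set V) (S : Set V) : ℕ :=
  sInf {i | ∃ C, IsInBranch G l X S C ∧ i = firstIdx l X C}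

/-- `β(S)`: the maximum of `b(H)` over in-branches `H` of `S`. -/
noncomputable def botEnd (G : SimpleGraph V) (l : ℕ) (X : ℕ → Set V) (S : Set V) : ℕ :=
  sSup {i | ∃ C, IsInBranch G l X S C ∧ i = lastIdx l X C}

/-- The interval `I(S,P) = [α(S), β(S)]` of a bottleneck `S`. -/
noncomputable def botInterval (G : SimpleGraph V) (l : ℕ) (X : ℕ → Set V) (S : Set V) : Set ℕ :=
  Set.Icc (botStart G l X S) (botEnd G l X S)

/-- A pre-branch of `S`. -/
def IsPreBranch (G : SimpleGraph V) (l : ℕ) (X : ℕ → Set V) (S C : Set V) : Prop :=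
  IsBranch G S C ∧ ¬ IsInBranch G l X S C ∧ firstIdx l X C < botStart G l X S

/-- A post-branch of `S`. -/
def IsPostBranch (G : SimpleGraph V) (l : ℕ) (X : ℕ → Set V) (S C : Set V) : Prop :=
  IsBranch G S C ∧ ¬ IsInBranch G l X S C ∧
    botStart G l X S ≤ firstIdx l X C ∧ botEnd G l X S < lastIdx l X C

/-- `C` waits in the interval `[i, j]` of the decomposition. -/
def WaitsIn (X : ℕ → Set V) (C : Set V) (i j : ℕ) : Prop :=
  ∀ t, i ≤ t → t ≤ j → C ∩ X t = C ∩ X i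

/-- The decomposition is `S`-structured: every component of `G - S` that is not an
`S`-branch, and every pre- or post-branch of `S`, waits in `I(S,P)`. -/
def IsStructured (G : SimpleGraph V) (l : ℕ) (X : ℕ → Set V) (S : Set V) : Prop :=
  ∀ C : Set V,
    ((IsCompOf G S C ∧ ¬ IsBranch G S C) ∨ IsPreBranch G l X S C ∨ IsPostBranch G l X S C) →
    WaitsIn X C (botStart G l X S) (botEnd G l X S)

/-- The decomposition is `I`-connected: every connected component of the subgraph
induced by any prefix of bags contains a vertex of `I`. -/
def IsIConn (G : SimpleGraph V) (l : ℕ) (X : ℕ → Set V) (I : Set V) : Prop :=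
  ∀ i < l, ∀ C : Set V, IsCompIn G {v | ∃ j ≤ i, v ∈ X j} C → (C ∩ I).Nonempty

/-!
An `S`-branch is connected and has every vertex of `S` as a neighbour. If it is not an in-branch,
it therefore meets `X p` or `X q`, where `p` is the largest first index and `q` the smallest last
index of a vertex of `S`. Branches are disjoint, so at most `2k` of them are not in-branches. Hence
a bottleneck `S` has an in-branch, and `S` lies in every bag of `I(S,P)`.

Suppose that `I(S,P)` and `I(S',P)` overlap and neither contains the other. Then `I(S,P)` contains
an endpoint of `I(S',P)`, and so meets the support of an in-branch `K` of `S'`. A bag of `I(S,P)`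
outside `I(S',P)` contains `S` and misses `K`, so `K` lies in a component `C` of `G - S`. This `C`
does not wait in `I(S,P)`, so it is an in-branch of `S` and lives only in bags of `I(S,P)`. Since
`C` contains `S' \ S`, while `S'` lies in a bag outside `I(S,P)`, we get `S' ⊆ S`. By symmetry
`S = S'`, a contradiction.
-/

section Components

variable {G : SimpleGraph V} {U C K L : Set V}

lemma connected_induce_singleton (v : V) : (G.induce {v}).Connected :=
  Connected.of_subsingleton

lemma exists_adj_of_not_subset (hC : (G.induce C).Connected) (hCL : (C ∩ L).Nonempty)
    (hnot : ¬C ⊆ L) : ∃ u ∈ C ∩ L, ∃ w ∈ C \ L, G.Adj u w := by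
  obtain ⟨v, hvC, hvL⟩ := hCL
  obtain ⟨w, hwC, hwL⟩ := Set.not_subset.1 hnot
  obtain ⟨p⟩ := hC.preconnected ⟨v, hvC⟩ ⟨w, hwC⟩
  obtain ⟨d, -, hfst, hsnd⟩ := p.exists_boundary_dart (Subtype.val ⁻¹' L) hvL hwL
  exact ⟨d.fst, ⟨d.fst.2, hfst⟩, d.snd, ⟨d.snd.2, hsnd⟩, d.adj⟩

lemma IsCompIn.subset_of_connected (hC : IsCompIn G U C) (hK : (G.induce K).Connected)
    (hKU : K ⊆ U) (hKC : (K ∩ C).Nonempty) : K ⊆ C := by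
  by_contra hnot
  obtain ⟨u, ⟨-, huC⟩, w, ⟨hwK, hwC⟩, huw⟩ := exists_adj_of_not_subset hK hKC hnot
  exact hwC (hC.2.2.2 u huC w (hKU hwK) huw)

lemma pairwiseDisjoint_isCompIn (G : SimpleGraph V) (U : Set V) :
    {C | IsCompIn G U C}.PairwiseDisjoint id := by
  intro C hC D hD hne
  by_contra hmeet
  have hCD : (C ∩ D).Nonempty := Set.not_disjoint_iff_nonempty_inter.1 hmeet
  exact hne <| (hD.subset_of_connected hC.2.2.1 hC.2.1 hCD).antisymm
    (hC.subset_of_connected hD.2.2.1 hD.2.1 (Set.inter_comm C D ▸ hCD))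

lemma exists_isCompIn_superset (hK : (G.induce K).Connected) (hKU : K ⊆ U) :
    ∃ C, IsCompIn G U C ∧ K ⊆ C := by
  obtain ⟨⟨v, hvK⟩⟩ := hK.nonempty
  let F : Set (Set V) := {D | v ∈ D ∧ D ⊆ U ∧ (G.induce D).Connected}
  have hKF : K ∈ F := ⟨hvK, hKU, hK⟩
  have hFU : ⋃₀ F ⊆ U := Set.sUnion_subset fun D hD => hD.2.1
  refine ⟨⋃₀ F, ⟨⟨v, K, hKF, hvK⟩, hFU, ?_, ?_⟩, Set.subset_sUnion_of_mem hKF⟩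
  · exact induce_sUnion_connected_of_pairwise_not_disjoint ⟨K, hKF⟩
      (fun hD hE => ⟨v, hD.1, hE.1⟩) (fun hD => hD.2.2)
  · rintro u ⟨D, ⟨hvD, hDU, hD⟩, huD⟩ w hwU huw
    have hDw : (G.induce (D ∪ {w})).Connected :=
      connected_induce_union hD.preconnected (connected_induce_singleton w).preconnected huD rfl huw
    have hDwU : D ∪ {w} ⊆ U := Set.union_subset hDU (Set.singleton_subset_iff.2 hwU)
    exact ⟨D ∪ {w}, ⟨.inl hvD, hDwU, hDw⟩, .inr rfl⟩

lemma IsCompIn.nbhdSet_inter_subset (hC : IsCompIn G U C) (hKC : K ⊆ C) :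
    nbhdSet G K ∩ U ⊆ C := by
  rintro s ⟨⟨-, u, huK, hus⟩, hsU⟩
  exact hC.2.2.2 u (hKC huK) s hsU hus

end Components

lemma ncard_le_ncard_of_pairwiseDisjoint {α : Type*} {F : Set (Set α)} {Y : Set α}
    (hF : F.PairwiseDisjoint id) (hFY : ∀ C ∈ F, (C ∩ Y).Nonempty) (hY : Y.Finite) :
    F.ncard ≤ Y.ncard := by
  rcases F.eq_empty_or_nonempty with rfl | ⟨C₀, hC₀⟩
  · simp only [Set.ncard_empty, zero_le]
  have : Nonempty α := (hFY C₀ hC₀).to_type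
  choose! f hfC hfY using hFY
  exact Set.ncard_le_ncard_of_injOn f hfY
    (fun C hC D hD hCD => hF.elim_set hC hD (f C) (hfC C hC) (hCD ▸ hfC D hD)) hY

section Support

variable {G : SimpleGraph V} {l t : ℕ} {X : ℕ → Set V} {C D : Set V}

lemma mem_supp_singleton {v : V} : t ∈ supp l X {v} ↔ t < l ∧ v ∈ X t := by
  simp only [supp, Set.mem_ofPred_eq, Set.singleton_inter_nonempty]

lemma bddAbove_supp : BddAbove (supp l X C) := ⟨l, fun _ ht => ht.1.le⟩

lemma firstIdx_mem_supp (hC : (supp l X C).Nonempty) : firstIdx l X C ∈ supp l X C :=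
  Nat.sInf_mem hC

lemma lastIdx_mem_supp (hC : (supp l X C).Nonempty) : lastIdx l X C ∈ supp l X C :=
  Nat.sSup_mem hC bddAbove_supp

lemma firstIdx_le (ht : t ∈ supp l X C) : firstIdx l X C ≤ t := Nat.sInf_le ht

lemma le_lastIdx (ht : t ∈ supp l X C) : t ≤ lastIdx l X C := le_csSup bddAbove_supp ht

lemma lastIdx_le : lastIdx l X C ≤ l := csSup_le' (show l ∈ upperBounds _ from fun _ ht => ht.1.le)

lemma ncard_bag_le (ht : t < l) : (X t).ncard ≤ pdWidth l X + 1 :=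
  (Finset.le_sup (f := fun i => (X i).ncard) (Finset.mem_range.2 ht)).trans le_tsub_add

namespace IsPathDecomp

lemma supp_nonempty (hP : IsPathDecomp G l X) (hC : C.Nonempty) : (supp l X C).Nonempty := by
  obtain ⟨v, hv⟩ := hC
  obtain ⟨i, hi, hvi⟩ := hP.1 v
  exact ⟨i, hi, v, hv, hvi⟩

lemma ordConnected_supp (hP : IsPathDecomp G l X) (hC : (G.induce C).Connected) :
    (supp l X C).OrdConnected := by
  refine Set.ordConnected_def.2 fun i hi m hm j hj => ?_
  obtain ⟨-, u, huC, hui⟩ := hi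
  obtain ⟨hml, w, hwC, hwm⟩ := hm
  by_contra hjC
  have hmiss : ∀ v ∈ C, v ∉ X j := fun v hv hvj => hjC ⟨hj.2.trans_lt hml, v, hv, hvj⟩
  let L : Set V := {v | ∃ t ≤ j, v ∈ X t}
  have hmeet : (C ∩ L).Nonempty := ⟨u, huC, i, hj.1, hui⟩
  have hnot : ¬C ⊆ L := fun hsub =>
    have ⟨t, htj, hwt⟩ := hsub hwC
    hmiss w hwC (hP.2.2 t j m htj hj.2 hml ⟨hwt, hwm⟩)
  obtain ⟨x, ⟨hxC, t, htj, hxt⟩, y, ⟨-, hy⟩, hxy⟩ := exists_adj_of_not_subset hC hmeet hnot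
  obtain ⟨r, hrl, hxr, hyr⟩ := hP.2.1 x y hxy
  have hjr : j ≤ r := le_of_not_ge fun hrj => hy ⟨r, hrj, hyr⟩
  exact hmiss x hxC (hP.2.2 t j r htj hjr hrl ⟨hxt, hxr⟩)

lemma firstIdx_lt_firstIdx_of_notMem (hP : IsPathDecomp G l X) (hD : (G.induce D).Connected)
    (hCD : (supp l X C ∩ supp l X D).Nonempty) (hC : firstIdx l X C ∉ supp l X D) :
    firstIdx l X C < firstIdx l X D := by
  obtain ⟨t, htC, htD⟩ := hCD
  by_contra! hle
  exact hC ((hP.ordConnected_supp hD).out (firstIdx_mem_supp ⟨t, htD⟩) htD ⟨hle, firstIdx_le htC⟩)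

lemma lastIdx_lt_lastIdx_of_notMem (hP : IsPathDecomp G l X) (hD : (G.induce D).Connected)
    (hCD : (supp l X C ∩ supp l X D).Nonempty) (hC : lastIdx l X C ∉ supp l X D) :
    lastIdx l X D < lastIdx l X C := by
  obtain ⟨t, htC, htD⟩ := hCD
  by_contra! hle
  exact hC ((hP.ordConnected_supp hD).out htD (lastIdx_mem_supp ⟨t, htD⟩) ⟨le_lastIdx htC, hle⟩)

end IsPathDecomp

end Support

section Branches

variable {G : SimpleGraph V} {l : ℕ} {X : ℕ → Set V} {S C : Set V} {s : V}

namespace IsBranch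

lemma nonempty (hC : IsBranch G S C) : C.Nonempty := hC.1.1

lemma connected (hC : IsBranch G S C) : (G.induce C).Connected := hC.1.2.2.1

lemma supp_inter_supp_singleton_nonempty (hP : IsPathDecomp G l X) (hC : IsBranch G S C)
    (hs : s ∈ S) : (supp l X C ∩ supp l X {s}).Nonempty := by
  obtain ⟨-, u, hu, hus⟩ : s ∈ nbhdSet G C := hC.2 ▸ hs
  obtain ⟨t, ht, hut, hst⟩ := hP.2.1 u s hus
  exact ⟨t, ⟨ht, u, hu, hut⟩, mem_supp_singleton.2 ⟨ht, hst⟩⟩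

lemma firstIdx_singleton_mem_supp (hP : IsPathDecomp G l X) (hC : IsBranch G S C) (hs : s ∈ S)
    (hmax : ∀ v ∈ S, firstIdx l X {v} ≤ firstIdx l X {s}) (hnot : ¬S ⊆ X (firstIdx l X C)) :
    firstIdx l X {s} ∈ supp l X C := by
  obtain ⟨v, hv, hvX⟩ := Set.not_subset.1 hnot
  have hlt : firstIdx l X C < firstIdx l X {v} :=
    hP.firstIdx_lt_firstIdx_of_notMem (connected_induce_singleton v)
      (hC.supp_inter_supp_singleton_nonempty hP hv) fun h => hvX (mem_supp_singleton.1 h).2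
  obtain ⟨t, htC, hts⟩ := hC.supp_inter_supp_singleton_nonempty hP hs
  exact (hP.ordConnected_supp hC.connected).out (firstIdx_mem_supp ⟨t, htC⟩) htC
    ⟨hlt.le.trans (hmax v hv), firstIdx_le hts⟩

lemma lastIdx_singleton_mem_supp (hP : IsPathDecomp G l X) (hC : IsBranch G S C) (hs : s ∈ S)
    (hmin : ∀ v ∈ S, lastIdx l X {s} ≤ lastIdx l X {v}) (hnot : ¬S ⊆ X (lastIdx l X C)) :
    lastIdx l X {s} ∈ supp l X C := by
  obtain ⟨v, hv, hvX⟩ := Set.not_subset.1 hnot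
  have hlt : lastIdx l X {v} < lastIdx l X C :=
    hP.lastIdx_lt_lastIdx_of_notMem (connected_induce_singleton v)
      (hC.supp_inter_supp_singleton_nonempty hP hv) fun h => hvX (mem_supp_singleton.1 h).2
  obtain ⟨t, htC, hts⟩ := hC.supp_inter_supp_singleton_nonempty hP hs
  exact (hP.ordConnected_supp hC.connected).out htC (lastIdx_mem_supp ⟨t, htC⟩)
    ⟨le_lastIdx hts, (hmin v hv).trans hlt.le⟩

end IsBranch

lemma ncard_isBranch_not_isInBranch_le [Finite V] (hP : IsPathDecomp G l X) (hS : S.Nonempty) :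
    {C | IsBranch G S C ∧ ¬IsInBranch G l X S C}.ncard ≤ 2 * (pdWidth l X + 1) := by
  obtain ⟨s₀, hs₀, hmax⟩ := Set.exists_max_image S (fun s => firstIdx l X {s}) S.toFinite hS
  obtain ⟨s₁, hs₁, hmin⟩ := Set.exists_min_image S (fun s => lastIdx l X {s}) S.toFinite hS
  set p := firstIdx l X {s₀}
  set q := lastIdx l X {s₁}
  have hp : p < l := (firstIdx_mem_supp (hP.supp_nonempty (Set.singleton_nonempty s₀))).1
  have hq : q < l := (lastIdx_mem_supp (hP.supp_nonempty (Set.singleton_nonempty s₁))).1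
  have hmeet : ∀ C ∈ {C | IsBranch G S C ∧ ¬IsInBranch G l X S C},
      (C ∩ (X p ∪ X q)).Nonempty := by
    rintro C ⟨hC, hnot⟩
    by_cases hfirst : S ⊆ X (firstIdx l X C)
    · have hlast : ¬S ⊆ X (lastIdx l X C) := fun h => hnot ⟨hC, hfirst, h⟩
      exact (hC.lastIdx_singleton_mem_supp hP hs₁ hmin hlast).2.mono
        (Set.inter_subset_inter_right C Set.subset_union_right)
    · exact (hC.firstIdx_singleton_mem_supp hP hs₀ hmax hfirst).2.mono
        (Set.inter_subset_inter_right C Set.subset_union_left)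
  have hdisj : {C | IsBranch G S C ∧ ¬IsInBranch G l X S C}.PairwiseDisjoint id :=
    (pairwiseDisjoint_isCompIn G Sᶜ).subset fun _ hC => hC.1.1
  calc {C | IsBranch G S C ∧ ¬IsInBranch G l X S C}.ncard
      ≤ (X p ∪ X q).ncard := ncard_le_ncard_of_pairwiseDisjoint hdisj hmeet (Set.toFinite _)
    _ ≤ (X p).ncard + (X q).ncard := Set.ncard_union_le _ _
    _ ≤ (pdWidth l X + 1) + (pdWidth l X + 1) := add_le_add (ncard_bag_le hp) (ncard_bag_le hq)
    _ = 2 * (pdWidth l X + 1) := (two_mul _).symm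

lemma IsBottleneck.exists_isInBranch [Finite V] {k : ℕ} (hP : IsPathDecomp G l X)
    (hw : pdWidth l X < k) (hS : IsBottleneck G k S) : ∃ C, IsInBranch G l X S C := by
  by_contra! hnone
  have hall : {C | IsBranch G S C ∧ ¬IsInBranch G l X S C} = {C | IsBranch G S C} :=
    Set.ext fun C => and_iff_left (hnone C)
  have hle := ncard_isBranch_not_isInBranch_le hP hS.1
  rw [hall] at hle
  have hge := hS.2
  omega

end Branches

section BottleneckIntervals

variable {G : SimpleGraph V} {l t : ℕ} {X : ℕ → Set V} {S S' C K : Set V}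

lemma bddAbove_lastIdx : BddAbove {i | ∃ C, IsInBranch G l X S C ∧ i = lastIdx l X C} := by
  refine ⟨l, ?_⟩
  rintro _ ⟨C, -, rfl⟩
  exact lastIdx_le

lemma exists_firstIdx_eq_botStart (h : ∃ C, IsInBranch G l X S C) :
    ∃ C, IsInBranch G l X S C ∧ botStart G l X S = firstIdx l X C :=
  have ⟨C, hC⟩ := h
  Nat.sInf_mem (s := {i | ∃ C, IsInBranch G l X S C ∧ i = firstIdx l X C}) ⟨_, C, hC, rfl⟩

lemma exists_lastIdx_eq_botEnd (h : ∃ C, IsInBranch G l X S C) :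
    ∃ C, IsInBranch G l X S C ∧ botEnd G l X S = lastIdx l X C :=
  have ⟨C, hC⟩ := h
  Nat.sSup_mem (s := {i | ∃ C, IsInBranch G l X S C ∧ i = lastIdx l X C}) ⟨_, C, hC, rfl⟩
    bddAbove_lastIdx

lemma botStart_le_firstIdx (hC : IsInBranch G l X S C) :
    botStart G l X S ≤ firstIdx l X C :=
  Nat.sInf_le ⟨C, hC, rfl⟩

lemma lastIdx_le_botEnd (hC : IsInBranch G l X S C) : lastIdx l X C ≤ botEnd G l X S :=
  le_csSup bddAbove_lastIdx ⟨C, hC, rfl⟩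

lemma IsInBranch.supp_subset_botInterval (hC : IsInBranch G l X S C) :
    supp l X C ⊆ botInterval G l X S := fun _ ht =>
  ⟨(botStart_le_firstIdx hC).trans (firstIdx_le ht), (le_lastIdx ht).trans (lastIdx_le_botEnd hC)⟩

lemma IsPathDecomp.lt_of_mem_botInterval (hP : IsPathDecomp G l X)
    (h : ∃ C, IsInBranch G l X S C) (ht : t ∈ botInterval G l X S) : t < l := by
  obtain ⟨C, hC, hend⟩ := exists_lastIdx_eq_botEnd h
  exact ht.2.trans_lt (hend ▸ (lastIdx_mem_supp (hP.supp_nonempty hC.1.nonempty)).1)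

lemma IsPathDecomp.subset_bag_of_mem_botInterval (hP : IsPathDecomp G l X)
    (h : ∃ C, IsInBranch G l X S C) (ht : t ∈ botInterval G l X S) : S ⊆ X t := by
  obtain ⟨C, hC, hstart⟩ := exists_firstIdx_eq_botStart h
  obtain ⟨D, hD, hend⟩ := exists_lastIdx_eq_botEnd h
  have hlt : botEnd G l X S < l := hP.lt_of_mem_botInterval h ⟨ht.1.trans ht.2, le_rfl⟩
  exact fun s hs => hP.2.2 _ t _ ht.1 ht.2 hlt ⟨hstart ▸ hC.2.1 hs, hend ▸ hD.2.2 hs⟩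

lemma WaitsIn.mono {i j : ℕ} (hC : WaitsIn X C i j) (hKC : K ⊆ C) : WaitsIn X K i j := by
  intro t hit htj
  rw [← Set.inter_eq_left.2 hKC, Set.inter_assoc, Set.inter_assoc, hC t hit htj]

namespace IsStructured

lemma isInBranch_of_not_waitsIn (hP : IsPathDecomp G l X) (hstr : IsStructured G l X S)
    (h : ∃ C, IsInBranch G l X S C) (hC : IsCompOf G S C)
    (hwait : ¬WaitsIn X C (botStart G l X S) (botEnd G l X S)) : IsInBranch G l X S C := by
  by_contra hin
  have hbranch : IsBranch G S C := by
    by_contra hbranch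
    exact hwait (hstr C (.inl ⟨hC, hbranch⟩))
  have hstart : botStart G l X S ≤ firstIdx l X C := by
    by_contra! hpre
    exact hwait (hstr C (.inr (.inl ⟨hbranch, hin, hpre⟩)))
  have hend : lastIdx l X C ≤ botEnd G l X S := by
    by_contra! hpost
    exact hwait (hstr C (.inr (.inr ⟨hbranch, hin, hstart, hpost⟩)))
  have hle : firstIdx l X C ≤ lastIdx l X C :=
    le_lastIdx (firstIdx_mem_supp (hP.supp_nonempty hC.1))
  exact hin ⟨hbranch, hP.subset_bag_of_mem_botInterval h ⟨hstart, hle.trans hend⟩,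
    hP.subset_bag_of_mem_botInterval h ⟨hstart.trans hle, hend⟩⟩

lemma exists_isInBranch_superset (hP : IsPathDecomp G l X) (hstr : IsStructured G l X S)
    (h : ∃ C, IsInBranch G l X S C) (hK : (G.induce K).Connected)
    (hmeet : (supp l X K ∩ botInterval G l X S).Nonempty)
    (hmiss : ¬botInterval G l X S ⊆ supp l X K) : ∃ C, IsInBranch G l X S C ∧ K ⊆ C := by
  obtain ⟨r, ⟨-, hKr⟩, hr⟩ := hmeet
  obtain ⟨t, ht, htK⟩ := Set.not_subset.1 hmiss
  have hKt : ¬(K ∩ X t).Nonempty := fun hne => htK ⟨hP.lt_of_mem_botInterval h ht, hne⟩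
  have hKS : K ⊆ Sᶜ := fun v hvK hvS => hKt ⟨v, hvK, hP.subset_bag_of_mem_botInterval h ht hvS⟩
  obtain ⟨C, hC, hKC⟩ := exists_isCompIn_superset hK hKS
  refine ⟨C, hstr.isInBranch_of_not_waitsIn hP h hC fun hwait => hKt ?_, hKC⟩
  have hKwait := hwait.mono hKC
  rwa [hKwait t ht.1 ht.2, ← hKwait r hr.1 hr.2]

end IsStructured

lemma exists_isInBranch_supp_inter_botInterval (hP : IsPathDecomp G l X)
    (h' : ∃ C, IsInBranch G l X S' C)
    (hinter : (botInterval G l X S ∩ botInterval G l X S').Nonempty)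
    (hnot : ¬botInterval G l X S ⊆ botInterval G l X S') :
    ∃ K, IsInBranch G l X S' K ∧ (supp l X K ∩ botInterval G l X S).Nonempty := by
  obtain ⟨t, ht, ht'⟩ := hinter
  by_cases hle : botStart G l X S ≤ botStart G l X S'
  · obtain ⟨K, hK, hstart⟩ := exists_firstIdx_eq_botStart h'
    have hmem := firstIdx_mem_supp (hP.supp_nonempty hK.1.nonempty)
    exact ⟨K, hK, botStart G l X S', hstart ▸ hmem, hle, ht'.1.trans ht.2⟩
  · have hend_le : botEnd G l X S' ≤ botEnd G l X S := by
      by_contra! hlt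
      exact hnot (Set.Icc_subset_Icc (not_le.1 hle).le hlt.le)
    obtain ⟨K, hK, hend⟩ := exists_lastIdx_eq_botEnd h'
    have hmem := lastIdx_mem_supp (hP.supp_nonempty hK.1.nonempty)
    exact ⟨K, hK, botEnd G l X S', hend ▸ hmem, ht.1.trans ht'.2, hend_le⟩

lemma IsStructured.subset_of_crossing (hP : IsPathDecomp G l X) (hstr : IsStructured G l X S)
    (h : ∃ C, IsInBranch G l X S C) (h' : ∃ C, IsInBranch G l X S' C)
    (hinter : (botInterval G l X S ∩ botInterval G l X S').Nonempty)
    (hnot : ¬botInterval G l X S ⊆ botInterval G l X S')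
    (hnot' : ¬botInterval G l X S' ⊆ botInterval G l X S) : S' ⊆ S := by
  obtain ⟨K, hK, hmeet⟩ := exists_isInBranch_supp_inter_botInterval hP h' hinter hnot
  obtain ⟨C, hC, hKC⟩ := hstr.exists_isInBranch_superset hP h hK.1.connected hmeet
    fun hsub => hnot (hsub.trans hK.supp_subset_botInterval)
  obtain ⟨t, ht', ht⟩ := Set.not_subset.1 hnot'
  intro s hs
  by_contra hsS
  have hsC : s ∈ C := hC.1.1.nbhdSet_inter_subset hKC ⟨hK.1.2.symm ▸ hs, hsS⟩
  exact ht <| hC.supp_subset_botInterval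
    ⟨hP.lt_of_mem_botInterval h' ht', s, hsC, hP.subset_bag_of_mem_botInterval h' ht' hs⟩

end BottleneckIntervals

theorem stmt16_general {G : SimpleGraph V} {l : ℕ} {X : ℕ → Set V} {S S' : Set V}
    (hP : IsPathDecomp G l X) (h : ∃ C, IsInBranch G l X S C) (h' : ∃ C, IsInBranch G l X S' C)
    (hstr : IsStructured G l X S) (hstr' : IsStructured G l X S') :
    botInterval G l X S ⊆ botInterval G l X S' ∨
      botInterval G l X S' ⊆ botInterval G l X S ∨
      botInterval G l X S ∩ botInterval G l X S' = ∅ := by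
  by_contra! ⟨hnot, hnot', hinter⟩
  have hS'S : S' ⊆ S := hstr.subset_of_crossing hP h h' hinter hnot hnot'
  have hSS' : S ⊆ S' :=
    hstr'.subset_of_crossing hP h' h (Set.inter_comm _ _ ▸ hinter) hnot' hnot
  exact hnot (hSS'.antisymm hS'S ▸ subset_rfl)

/-- if an `I`-connected path decomposition of width at most `k-1`
is `S`-structured for every bottleneck `S`, then the family of bottleneck
intervals is laminar. -/
theorem stmt16 [Fintype V] (k : ℕ) (hk : 1 ≤ k) (G : SimpleGraph V) (I : Set V)
    (l : ℕ) (X : ℕ → Set V) (hP : IsPathDecomp G l X) (hIc : IsIConn G l X I)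
    (hw : pdWidth l X ≤ k - 1)
    (hstr : ∀ S : Set V, IsBottleneck G k S → IsStructured G l X S) :
    ∀ S S' : Set V, IsBottleneck G k S → IsBottleneck G k S' →
      botInterval G l X S ⊆ botInterval G l X S' ∨
      botInterval G l X S' ⊆ botInterval G l X S ∨
      botInterval G l X S ∩ botInterval G l X S' = ∅ := by
  have hin {S : Set V} (hS : IsBottleneck G k S) := hS.exists_isInBranch hP (by omega)
  exact fun S S' hS hS' => stmt16_general hP (hin hS) (hin hS') (hstr S hS) (hstr S' hS')
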